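/- Let A be a timed automaton and let {G(q)}_{q ∈ Q} be the least solution of the state-based guard equations. Then the relation ≼_A on configurations of A, defined by (q, v) ≼_A (q, v') iff v ⊑_{G(q)} v', is a simulation on the configurations of A. -/

import Mathlib

open scoped NNReal

/-! ## Atomic constraints over a set of clocks -/

/-- Comparison operator `◁ ∈ {<, ≤}`. -/
inductive Ineq : Type where
  | lt : Ineq
  | le : Ineq
deriving DecidableEq

/-- Interpretation of a comparison operator on reals. -/
def Ineq.holds : Ineq → ℝ → ℝ → Prop
  | .lt, a, b => a < b
  | .le, a, b => a ≤ b

/-- Atomic constraints over clocks `X`: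
`upper x o c` is `x ◁ c` (c ∈ ℕ), `lower c o x` is `c ◁ x` (c ∈ ℕ),
`diag x y o d` is `x - y ◁ d` (d ∈ ℤ). -/
inductive Constr (X : Type) : Type where
  | upper : X → Ineq → ℕ → Constr X
  | lower : ℕ → Ineq → X → Constr X
  | diag : X → X → Ineq → ℤ → Constr X
deriving DecidableEq

namespace Constr

/-- Is the constraint a diagonal constraint `x - y ◁ d`? -/
def isDiag {X : Type} : Constr X → Bool
  | .diag _ _ _ _ => true
  | _ => false

/-- The integer constant of a constraint. -/
def constOf {X : Type} : Constr X → ℤ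
  | .upper _ _ c => (c : ℤ)
  | .lower c _ _ => (c : ℤ)
  | .diag _ _ _ d => d

/-- Satisfaction of a constraint by a clock valuation `v : X → ℝ≥0`. -/
def sat {X : Type} (v : X → ℝ≥0) : Constr X → Prop
  | .upper x o c => o.holds (v x : ℝ) (c : ℝ)
  | .lower c o x => o.holds (c : ℝ) (v x : ℝ)
  | .diag x y o d => o.holds ((v x : ℝ) - (v y : ℝ)) (d : ℝ)

end Constr

/-- Time elapse: `v + δ`. -/
def shift {X : Type} (v : X → ℝ≥0) (δ : ℝ≥0) : X → ℝ≥0 := fun x => v x + δ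

/-- The relation `v ⊑_G v'`: for all `φ ∈ G` and all delays `δ ≥ 0`,
`v + δ ⊨ φ` implies `v' + δ ⊨ φ`. -/
def simG {X : Type} (G : Set (Constr X)) (v v' : X → ℝ≥0) : Prop :=
  ∀ φ ∈ G, ∀ δ : ℝ≥0, Constr.sat (shift v δ) φ → Constr.sat (shift v' δ) φ

/-- `Z ⊑_G Z'` on sets of valuations. -/
def simGZ {X : Type} (G : Set (Constr X)) (Z Z' : Set (X → ℝ≥0)) : Prop :=
  ∀ v ∈ Z, ∃ v' ∈ Z', simG G v v'

open Classical in
/-- `[R]v`: reset the clocks in `R` to `0`. -/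
noncomputable def reset {X : Type} (R : Set X) (v : X → ℝ≥0) : X → ℝ≥0 :=
  fun x => if x ∈ R then 0 else v x

/-- Weakest precondition `wp(⊑_φ, R)` of a single constraint over a reset. -/
def wpReset {X : Type} (R : Set X) : Constr X → Set (Constr X)
  | .upper x o c => {ψ | x ∉ R ∧ ψ = .upper x o c}
  | .lower c o x => {ψ | x ∉ R ∧ ψ = .lower c o x}
  | .diag x y o d =>
      {ψ | (x ∉ R ∧ y ∉ R ∧ ψ = .diag x y o d) ∨
           (x ∉ R ∧ y ∈ R ∧ 0 ≤ d ∧ ψ = .upper x o d.toNat) ∨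
           (x ∈ R ∧ y ∉ R ∧ 0 ≤ -d ∧ ψ = .lower (-d).toNat o y)}

/-- Weakest precondition `wp(⊑_G, R)` of a set of constraints over a reset. -/
def wpResetSet {X : Type} (R : Set X) (G : Set (Constr X)) : Set (Constr X) :=
  ⋃ φ ∈ G, wpReset R φ

/-! ## Timed automata -/

/-- A transition: source state, guard (finite conjunction of constraints),
reset set, target state. -/
abbrev TTrans (Q X : Type) : Type := Q × Finset (Constr X) × Set X × Q

def TTrans.src {Q X : Type} (t : TTrans Q X) : Q := t.1
def TTrans.grd {Q X : Type} (t : TTrans Q X) : Finset (Constr X) := t.2.1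
def TTrans.rst {Q X : Type} (t : TTrans Q X) : Set X := t.2.2.1
def TTrans.tgt {Q X : Type} (t : TTrans Q X) : Q := t.2.2.2

/-- A timed automaton. -/
structure TA (Q X : Type) : Type where
  init : Q
  trans : Finset (TTrans Q X)
  acc : Set Q

/-- Action step of a timed automaton along transition `t`. -/
def Step {Q X : Type} (A : TA Q X) (t : TTrans Q X) (c c' : Q × (X → ℝ≥0)) : Prop :=
  t ∈ A.trans ∧ TTrans.src t = c.1 ∧ (∀ φ ∈ TTrans.grd t, Constr.sat c.2 φ) ∧
    c'.1 = TTrans.tgt t ∧ c'.2 = reset (TTrans.rst t) c.2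

/-- `r` is a simulation on the configurations of `A`: a reflexive transitive
relation, relating only configurations with equal states, compatible with
delays and action transitions. -/
def IsSimulation {Q X : Type} (A : TA Q X)
    (r : (Q × (X → ℝ≥0)) → (Q × (X → ℝ≥0)) → Prop) : Prop :=
  Reflexive r ∧ Transitive r ∧
  ∀ q v q' v', r (q, v) (q', v') →
    q = q' ∧
    (∀ δ : ℝ≥0, ∃ δ' : ℝ≥0, r (q, shift v δ) (q, shift v' δ')) ∧
    (∀ t c₁, Step A t (q, v) c₁ →
      ∃ v₁', Step A t (q, v') (c₁.1, v₁') ∧ r c₁ (c₁.1, v₁'))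

/-- The state-based guard equations:
`G(q) = ⋃_{(q,g,R,q₁) ∈ T} ({g} ∪ wp(⊑_{G(q₁)}, R))`. -/
def GuardEq {Q X : Type} (A : TA Q X) (G : Q → Set (Constr X)) : Prop :=
  ∀ q, G q = ⋃ t ∈ A.trans, ⋃ (_ : TTrans.src t = q),
    ((TTrans.grd t : Set (Constr X)) ∪ wpResetSet (TTrans.rst t) (G (TTrans.tgt t)))

/-! ## LU bounds -/

def lowerConstAt {X : Type} [DecidableEq X] (x : X) : Constr X → WithBot ℕ
  | .lower c _ y => if y = x then (c : WithBot ℕ) else ⊥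
  | _ => ⊥

def upperConstAt {X : Type} [DecidableEq X] (x : X) : Constr X → WithBot ℕ
  | .upper y _ c => if y = x then (c : WithBot ℕ) else ⊥
  | _ => ⊥

/-- `L_G(x)`: maximum constant among lower-bound constraints `c ◁ x` in `G`
(`⊥ = -∞` if none). -/
def Lbound {X : Type} [DecidableEq X] (G : Finset (Constr X)) (x : X) : WithBot ℕ :=
  G.sup (lowerConstAt x)

/-- `U_G(x)`: maximum constant among upper-bound constraints `x ◁ c` in `G`
(`⊥ = -∞` if none). -/
def Ubound {X : Type} [DecidableEq X] (G : Finset (Constr X)) (x : X) : WithBot ℕ :=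
  G.sup (upperConstAt x)

/-- The LU simulation `v ≼_LU v'` for bounds functions `L U : X → ℕ ∪ {-∞}`. -/
def luSim {X : Type} (L U : X → WithBot ℕ) (v v' : X → ℝ≥0) : Prop :=
  ∀ x : X,
    (v' x < v x → (L x).map (fun c : ℕ => (c : ℝ)) < ((v' x : ℝ) : WithBot ℝ)) ∧
    (v x < v' x → (U x).map (fun c : ℕ => (c : ℝ)) < ((v x : ℝ) : WithBot ℝ))

/-- The relation `v ⊑^LU_G v'`: `v ≼_{LU(G)} v'` and every diagonal constraint
of `G` satisfied by `v` is satisfied by `v'`. -/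
def luglu {X : Type} [DecidableEq X] (G : Finset (Constr X)) (v v' : X → ℝ≥0) : Prop :=
  luSim (Lbound G) (Ubound G) v v' ∧
    ∀ φ ∈ G, φ.isDiag → Constr.sat v φ → Constr.sat v' φ

/-- Lifting a relation on valuations to sets of valuations. -/
def zoneRel {X : Type} (r : (X → ℝ≥0) → (X → ℝ≥0) → Prop) (Z Z' : Set (X → ℝ≥0)) : Prop :=
  ∀ v ∈ Z, ∃ v' ∈ Z', r v v'

/-! ## Runs of timed automata -/

/-- `stepsFrom A c l`: the alternating delay-action sequence `l` is a valid
sequence of steps of `A` starting at configuration `c`. -/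
def stepsFrom {Q X : Type} (A : TA Q X) :
    (Q × (X → ℝ≥0)) → List (ℝ≥0 × TTrans Q X) → Prop
  | _, [] => True
  | c, (δ, t) :: l =>
      t ∈ A.trans ∧ TTrans.src t = c.1 ∧
      (∀ φ ∈ TTrans.grd t, Constr.sat (shift c.2 δ) φ) ∧
      stepsFrom A (TTrans.tgt t, reset (TTrans.rst t) (shift c.2 δ)) l

/-- Configuration reached after a sequence of delay-action steps. -/
noncomputable def endConfig {Q X : Type} :
    (Q × (X → ℝ≥0)) → List (ℝ≥0 × TTrans Q X) → (Q × (X → ℝ≥0))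
  | c, [] => c
  | c, (δ, t) :: l => endConfig (TTrans.tgt t, reset (TTrans.rst t) (shift c.2 δ)) l

/-- A run of `A`: a valid sequence of delay-action steps from `(q₀, 0̄)`. -/
def TA.Run {Q X : Type} (A : TA Q X) : Type :=
  {l : List (ℝ≥0 × TTrans Q X) // stepsFrom A (A.init, fun _ => 0) l}

/-- A run is accepting if it ends in an accepting state. -/
def TA.Accepting {Q X : Type} (A : TA Q X) (r : A.Run) : Prop :=
  (endConfig (A.init, fun _ => 0) r.val).1 ∈ A.acc

/-- `A` is diagonal-free: no guard contains a diagonal constraint. -/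
def DiagFree {Q X : Type} (A : TA Q X) : Prop :=
  ∀ t ∈ A.trans, ∀ φ ∈ TTrans.grd t, ¬ φ.isDiag

/-- The (finite) set of diagonal constraints occurring in guards of `A`. -/
def diagGuards {Q X : Type} [DecidableEq X] (A : TA Q X) : Finset (Constr X) :=
  A.trans.biUnion fun t => (TTrans.grd t).filter fun φ => φ.isDiag

/-! ## Updateable timed automata -/

/-- Atomic update of a clock: `x := c` or `x := y + d`. -/
inductive AtomicUp (X : Type) : Type where
  | const : ℕ → AtomicUp X
  | add : X → ℤ → AtomicUp X
deriving DecidableEq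

/-- `up(v) : X → ℝ` (may be negative). -/
def applyUpd {X : Type} (up : X → AtomicUp X) (v : X → ℝ≥0) : X → ℝ :=
  fun x => match up x with
    | .const c => (c : ℝ)
    | .add y d => (v y : ℝ) + (d : ℝ)

/-- Weakest precondition `wp(⊑_φ, up)` of a single constraint over an update. -/
def wpUpd {X : Type} [DecidableEq X] (up : X → AtomicUp X) : Constr X → Set (Constr X)
  | .upper x o c =>
      match up x with
      | .const _ => ∅
      | .add y d => if 0 ≤ (c : ℤ) - d then {Constr.upper y o ((c : ℤ) - d).toNat} else ∅
  | .lower c o x =>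
      match up x with
      | .const _ => ∅
      | .add y d => if 0 ≤ (c : ℤ) - d then {Constr.lower ((c : ℤ) - d).toNat o y} else ∅
  | .diag x y o c =>
      match up x, up y with
      | .const _, .const _ => ∅
      | .add y₁ d₁, .const c₂ =>
          if 0 ≤ c + (c₂ : ℤ) - d₁ then {Constr.upper y₁ o (c + (c₂ : ℤ) - d₁).toNat} else ∅
      | .const c₁, .add y₂ d₂ =>
          if 0 ≤ (c₁ : ℤ) - d₂ - c then {Constr.lower ((c₁ : ℤ) - d₂ - c).toNat o y₂} else ∅
      | .add y₁ d₁, .add y₂ d₂ =>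
          if y₁ = y₂ then ∅ else {Constr.diag y₁ y₂ o (c - d₁ + d₂)}

/-- Weakest precondition `wp(⊑_G, up)` of a set of constraints over an update. -/
def wpUpdSet {X : Type} [DecidableEq X] (up : X → AtomicUp X) (G : Set (Constr X)) :
    Set (Constr X) :=
  ⋃ φ ∈ G, wpUpd up φ

/-- The set of constraints `{0 ≤ x | x ∈ X}`. -/
def nonnegConstrs (X : Type) : Set (Constr X) := {φ | ∃ x : X, φ = Constr.lower 0 Ineq.le x}

/-- A transition of an updateable timed automaton: source, guard, update, target. -/
abbrev UTrans (Q X : Type) : Type := Q × Finset (Constr X) × (X → AtomicUp X) × Q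

def UTrans.src {Q X : Type} (t : UTrans Q X) : Q := t.1
def UTrans.grd {Q X : Type} (t : UTrans Q X) : Finset (Constr X) := t.2.1
def UTrans.upd {Q X : Type} (t : UTrans Q X) : X → AtomicUp X := t.2.2.1
def UTrans.tgt {Q X : Type} (t : UTrans Q X) : Q := t.2.2.2

/-- An updateable timed automaton. -/
structure UTA (Q X : Type) : Type where
  init : Q
  trans : Finset (UTrans Q X)
  acc : Set Q

/-- Action step of an updateable timed automaton along transition `t`:
the guard holds, `up(v) ≥ 0`, and the new valuation is `up(v)`. -/
def UStep {Q X : Type} (A : UTA Q X) (t : UTrans Q X) (c c' : Q × (X → ℝ≥0)) : Prop :=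
  t ∈ A.trans ∧ UTrans.src t = c.1 ∧ (∀ φ ∈ UTrans.grd t, Constr.sat c.2 φ) ∧
    c'.1 = UTrans.tgt t ∧ ∀ x, (c'.2 x : ℝ) = applyUpd (UTrans.upd t) c.2 x

/-- `r` is a simulation on configurations of an updateable timed automaton. -/
def IsSimulationU {Q X : Type} (A : UTA Q X)
    (r : (Q × (X → ℝ≥0)) → (Q × (X → ℝ≥0)) → Prop) : Prop :=
  Reflexive r ∧ Transitive r ∧
  ∀ q v q' v', r (q, v) (q', v') →
    q = q' ∧
    (∀ δ : ℝ≥0, ∃ δ' : ℝ≥0, r (q, shift v δ) (q, shift v' δ')) ∧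
    (∀ t c₁, UStep A t (q, v) c₁ →
      ∃ v₁', UStep A t (q, v') (c₁.1, v₁') ∧ r c₁ (c₁.1, v₁'))

/-- State-based guard equations for updateable timed automata. -/
def GuardEqU {Q X : Type} [DecidableEq X] (A : UTA Q X) (G : Q → Set (Constr X)) : Prop :=
  ∀ q, G q = ⋃ t ∈ A.trans, ⋃ (_ : UTrans.src t = q),
    ((UTrans.grd t : Set (Constr X)) ∪ wpUpdSet (UTrans.upd t) (nonnegConstrs X)
      ∪ wpUpdSet (UTrans.upd t) (G (UTrans.tgt t)))

/-- Kleene iterates `G^i(q)` of the state-based guard equations. -/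
def iterG {Q X : Type} [DecidableEq X] (A : UTA Q X) : ℕ → Q → Set (Constr X)
  | 0 => fun q => ⋃ t ∈ A.trans, ⋃ (_ : UTrans.src t = q),
      ((UTrans.grd t : Set (Constr X)) ∪ wpUpdSet (UTrans.upd t) (nonnegConstrs X))
  | (i + 1) => fun q => iterG A i q ∪
      (⋃ t ∈ A.trans, ⋃ (_ : UTrans.src t = q),
        wpUpdSet (UTrans.upd t) (iterG A i (UTrans.tgt t)))

/-- `G^{i+1}(q)` is coloured red: a new diagonal constraint was added, or a new
non-diagonal constraint whose constant is strictly bigger than the constant of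
every non-diagonal constraint of the same kind on the same clock in `G^i(q)`. -/
def RedAt {Q X : Type} [DecidableEq X] (A : UTA Q X) : ℕ → Q → Prop
  | 0, _ => False
  | (i + 1), q =>
      (∃ φ : Constr X, φ ∈ iterG A (i + 1) q ∧ φ ∉ iterG A i q ∧ φ.isDiag) ∨
      (∃ (x : X) (o : Ineq) (c : ℕ),
        Constr.upper x o c ∈ iterG A (i + 1) q ∧ Constr.upper x o c ∉ iterG A i q ∧
        ∀ (o' : Ineq) (c' : ℕ), Constr.upper x o' c' ∈ iterG A i q → c' < c) ∨
      (∃ (x : X) (o : Ineq) (c : ℕ),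
        Constr.lower c o x ∈ iterG A (i + 1) q ∧ Constr.lower c o x ∉ iterG A i q ∧
        ∀ (o' : Ineq) (c' : ℕ), Constr.lower c' o' x ∈ iterG A i q → c' < c)

/-- `G^i(q)` is coloured green. -/
def GreenAt {Q X : Type} [DecidableEq X] (A : UTA Q X) (i : ℕ) (q : Q) : Prop :=
  ¬ RedAt A i q

/-- Absolute value of the constant of an atomic update. -/
def updBound {X : Type} : AtomicUp X → ℕ
  | .const c => c
  | .add _ d => d.natAbs

/-! ## The statement -/

/-!
Elapse of time preserves `⊑_G` because the relation quantifies over all delays, and taking the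
delay `0` transfers every guard contained in `G`. For resets, `v ⊑_{wp(⊑_φ, R)} v'` gives
`[R]v ⊑_φ [R]v'`: satisfaction of `x - y ◁ d` does not change with time, so when exactly one of
`x`, `y` is reset it says `x ◁ d` or `-d ◁ y` at delay `0`. If the sign of `d` keeps this from being
an atomic constraint, it is never satisfied or always satisfied, and `wp` need not contain it.
Hence `≼_A` is a simulation as soon as each transition's guard and the `wp` of its target's set lie
in the set of its source.
-/

section

variable {Q X : Type}

namespace Ineq

lemma holds_of_lt {o : Ineq} {a b : ℝ} (h : a < b) : o.holds a b := by
  cases o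
  exacts [h, h.le]

lemma le_of_holds {o : Ineq} {a b : ℝ} (h : o.holds a b) : a ≤ b := by
  cases o
  exacts [le_of_lt h, h]

lemma holds_neg_left {o : Ineq} {a b : ℝ} : o.holds (-a) b ↔ o.holds (-b) a := by
  cases o
  exacts [neg_lt, neg_le]

end Ineq

lemma shift_zero (v : X → ℝ≥0) : shift v 0 = v :=
  funext fun x => add_zero (v x)

lemma shift_shift (v : X → ℝ≥0) (δ ε : ℝ≥0) : shift (shift v δ) ε = shift v (δ + ε) :=
  funext fun x => add_assoc (v x) δ ε

lemma reset_of_mem {R : Set X} {x : X} (hx : x ∈ R) (v : X → ℝ≥0) : reset R v x = 0 :=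
  if_pos hx

lemma reset_of_notMem {R : Set X} {x : X} (hx : x ∉ R) (v : X → ℝ≥0) : reset R v x = v x :=
  if_neg hx

namespace Constr

lemma sat_shift_diag {v : X → ℝ≥0} {δ : ℝ≥0} {x y : X} {o : Ineq} {d : ℤ} :
    sat (shift v δ) (diag x y o d) ↔ sat v (diag x y o d) := by
  simp only [sat, shift, NNReal.coe_add, add_sub_add_right_eq_sub]

section Reset

variable {R : Set X} {v : X → ℝ≥0} {x y : X} {o : Ineq} {d : ℤ}

lemma sat_reset_diag_of_mem (hx : x ∈ R) (hy : y ∈ R) :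
    sat (reset R v) (diag x y o d) ↔ o.holds 0 d := by
  simp only [sat, reset_of_mem hx, reset_of_mem hy, sub_self, NNReal.coe_zero]

lemma sat_reset_diag_of_notMem (hx : x ∉ R) (hy : y ∉ R) :
    sat (reset R v) (diag x y o d) ↔ sat v (diag x y o d) := by
  simp only [sat, reset_of_notMem hx, reset_of_notMem hy]

lemma sat_reset_diag_of_notMem_of_mem (hx : x ∉ R) (hy : y ∈ R) :
    sat (reset R v) (diag x y o d) ↔ o.holds (v x) d := by
  simp only [sat, reset_of_notMem hx, reset_of_mem hy, NNReal.coe_zero, sub_zero]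

lemma sat_reset_diag_of_mem_of_notMem (hx : x ∈ R) (hy : y ∉ R) :
    sat (reset R v) (diag x y o d) ↔ o.holds (-d) (v y) := by
  simp only [sat, reset_of_mem hx, reset_of_notMem hy, NNReal.coe_zero, zero_sub,
    Ineq.holds_neg_left]

end Reset

lemma sat_upper_toNat {v : X → ℝ≥0} {x : X} {o : Ineq} {d : ℤ} (hd : 0 ≤ d) :
    sat v (upper x o d.toNat) ↔ o.holds (v x) d := by
  lift d to ℕ using hd
  rfl

lemma sat_lower_toNat {v : X → ℝ≥0} {x : X} {o : Ineq} {d : ℤ} (hd : 0 ≤ d) :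
    sat v (lower d.toNat o x) ↔ o.holds d (v x) := by
  lift d to ℕ using hd
  rfl

end Constr

namespace simG

variable {G G' : Set (Constr X)} {R : Set X} {v v' v'' : X → ℝ≥0}

protected lemma refl (G : Set (Constr X)) (v : X → ℝ≥0) : simG G v v :=
  fun _ _ _ hsat => hsat

protected lemma trans (h : simG G v v') (h' : simG G v' v'') : simG G v v'' :=
  fun φ hφ δ hsat => h' φ hφ δ (h φ hφ δ hsat)

protected lemma mono (hG : G' ⊆ G) (h : simG G v v') : simG G' v v' :=
  fun φ hφ => h φ (hG hφ)

protected lemma sat (h : simG G v v') {φ : Constr X} (hφ : φ ∈ G) (hv : φ.sat v) : φ.sat v' := by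
  simpa only [shift_zero] using h φ hφ 0 (by rwa [shift_zero])

protected lemma shift (h : simG G v v') (δ : ℝ≥0) : simG G (shift v δ) (shift v' δ) := by
  intro φ hφ ε
  simpa only [shift_shift] using h φ hφ (δ + ε)

lemma sat_reset_diag {x y : X} {o : Ineq} {d : ℤ} (h : simG (wpReset R (.diag x y o d)) v v')
    (hv : (Constr.diag x y o d).sat (reset R v)) : (Constr.diag x y o d).sat (reset R v') := by
  by_cases hx : x ∈ R <;> by_cases hy : y ∈ R
  · rwa [Constr.sat_reset_diag_of_mem hx hy] at hv ⊢
  · rw [Constr.sat_reset_diag_of_mem_of_notMem hx hy] at hv ⊢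
    rcases lt_or_ge 0 d with hd | hd
    · have hd' : (-d : ℝ) < 0 := neg_lt_zero.2 (Int.cast_pos.2 hd)
      exact Ineq.holds_of_lt (hd'.trans_le (v' y).coe_nonneg)
    · have hd' : 0 ≤ -d := neg_nonneg.2 hd
      rw [← Int.cast_neg, ← Constr.sat_lower_toNat hd'] at hv ⊢
      exact h.sat (Or.inr (Or.inr ⟨hx, hy, hd', rfl⟩)) hv
  · rw [Constr.sat_reset_diag_of_notMem_of_mem hx hy] at hv ⊢
    have hd : 0 ≤ d := Int.cast_nonneg_iff.1 ((v x).coe_nonneg.trans (Ineq.le_of_holds hv))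
    rw [← Constr.sat_upper_toNat hd] at hv ⊢
    exact h.sat (Or.inr (Or.inl ⟨hx, hy, hd, rfl⟩)) hv
  · rw [Constr.sat_reset_diag_of_notMem hx hy] at hv ⊢
    exact h.sat (Or.inl ⟨hx, hy, rfl⟩) hv

lemma sat_shift_reset {φ : Constr X} (h : simG (wpReset R φ) v v') {δ : ℝ≥0}
    (hv : φ.sat (shift (reset R v) δ)) : φ.sat (shift (reset R v') δ) := by
  cases φ with
  | upper x o c =>
    by_cases hx : x ∈ R
    · simpa only [Constr.sat, shift, reset_of_mem hx] using hv
    · simp only [Constr.sat, shift, reset_of_notMem hx] at hv ⊢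
      exact h (.upper x o c) ⟨hx, rfl⟩ δ hv
  | lower c o x =>
    by_cases hx : x ∈ R
    · simpa only [Constr.sat, shift, reset_of_mem hx] using hv
    · simp only [Constr.sat, shift, reset_of_notMem hx] at hv ⊢
      exact h (.lower c o x) ⟨hx, rfl⟩ δ hv
  | diag x y o d =>
    rw [Constr.sat_shift_diag] at hv ⊢
    exact h.sat_reset_diag hv

protected lemma reset (h : simG (wpResetSet R G) v v') : simG G (reset R v) (reset R v') :=
  fun _ hφ _ hv => (h.mono (Set.subset_biUnion_of_mem hφ)).sat_shift_reset hv

end simG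

lemma GuardEq.grd_union_wpResetSet_subset {A : TA Q X} {G : Q → Set (Constr X)}
    (hG : GuardEq A G) {t : TTrans Q X} (ht : t ∈ A.trans) :
    ↑t.grd ∪ wpResetSet t.rst (G t.tgt) ⊆ G t.src := by
  rw [hG t.src]
  exact Set.subset_iUnion₂_of_subset t ht (Set.subset_iUnion_of_subset rfl subset_rfl)

theorem stmt2_general (A : TA Q X) (G : Q → Set (Constr X))
    (hG : ∀ t ∈ A.trans, ↑t.grd ∪ wpResetSet t.rst (G t.tgt) ⊆ G t.src) :
    IsSimulation A (fun c c' => c.1 = c'.1 ∧ simG (G c.1) c.2 c'.2) := by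
  refine ⟨fun c => ⟨rfl, .refl _ _⟩, ?_, ?_⟩
  · rintro ⟨q, u⟩ ⟨_, v⟩ ⟨_, w⟩ ⟨rfl, huv⟩ ⟨rfl, hvw⟩
    exact ⟨rfl, huv.trans hvw⟩
  · rintro q v _ v' ⟨rfl, hsim⟩
    refine ⟨rfl, fun δ => ⟨δ, rfl, hsim.shift δ⟩, ?_⟩
    rintro t ⟨_, _⟩ ⟨ht, rfl, hgrd, rfl, rfl⟩
    obtain ⟨hguard, hwp⟩ := Set.union_subset_iff.1 (hG t ht)
    have hgrd' : ∀ φ ∈ t.grd, φ.sat v' := fun φ hφ => hsim.sat (hguard hφ) (hgrd φ hφ)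
    exact ⟨reset t.rst v', ⟨ht, rfl, hgrd', rfl, rfl⟩, rfl, (hsim.mono hwp).reset⟩

end

theorem stmt2 {Q X : Type} [Fintype Q] [Fintype X] (A : TA Q X)
    (G : Q → Set (Constr X)) (hfix : GuardEq A G)
    (hleast : ∀ G' : Q → Set (Constr X), GuardEq A G' → ∀ q, G q ⊆ G' q) :
    IsSimulation A (fun c c' => c.1 = c'.1 ∧ simG (G c.1) c.2 c'.2) :=
  stmt2_general A G fun _ ht => hfix.grd_union_wpResetSet_subset ht
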